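/- arXiv:0712.0179 — 2 statements merged into one kernel-verified Lean document; each statement's English description precedes it below -/
import Mathlib

section
/- Let l be a natural number, r ∈ (l, l+1], and f : ℝ → ℝ be l-times continuously differentiable with |f^(l)(x) - f^(l)(y)| ≤ |x-y|^(r-l) for all x,y. Let φ_t be the density of the normal law N(0, t²). Then for any integer p ≥ r and any t > 0, the p-th derivative of the convolution f * φ_t satisfies ‖(f * φ_t)^(p)‖_∞ ≤ c · t^(r-p), where c = ∫ |z|^(r-l) · |φ_1^(p-l)(z)| dz. -/
/-!
Write `g` for the density of `N(0, t²)` and `h = f^(l)`. Every derivative of `g` decays faster than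
any exponential, whereas `f, f', …, f^(l)` grow at most exponentially (`h` because it is Hölder, the
lower ones by the mean value inequality). Hence one may differentiate `p` times under the integral
sign (`iteratedDeriv_conv`) and integrate by parts `l` times (`conv_iterate_parts`), which gives
`(f * g)^(p) (x) = ∫ h(u) g^(p-l)(x - u) du`. As `p > l`, the function `g^(p-l)` has integral zero,
so `h(u)` may be replaced by `h(u) - h(x)`, which is at most `|x - u|^(r-l)` in absolute value. The
resulting integral `∫ |z|^(r-l) |g^(p-l)(z)| dz` is computed from the case `t = 1` by scaling.
-/

open Real MeasureTheory

noncomputable def gaussianDensity (t : ℝ) : ℝ → ℝ :=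
  fun x => (1 / (t * Real.sqrt (2 * Real.pi))) * Real.exp (-x ^ 2 / (2 * t ^ 2))

/-! ### Convolution of an exponentially growing function with a rapidly decaying kernel -/

/-- `h` grows at most exponentially. -/
def ExpGrowth (h : ℝ → ℝ) : Prop := ∃ (C : ℝ) (a : ℕ), ∀ x, |h x| ≤ C * exp (a * |x|)

/-- `k` decays faster than any exponential. -/
def SuperExpDecay (k : ℝ → ℝ) : Prop := ∀ a : ℕ, ∃ C : ℝ, ∀ x, |k x| ≤ C * exp (-(a * |x|))

lemma integrable_exp_neg_abs' : Integrable (fun x : ℝ => exp (-|x|)) := by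
  refine (integrable_inv_one_add_sq.const_mul 2).mono' (by fun_prop) (ae_of_all _ fun x => ?_)
  rw [Real.norm_eq_abs, abs_of_pos (exp_pos _), exp_neg, ← div_eq_mul_inv, inv_eq_one_div,
    div_le_div_iff₀ (exp_pos _) (by positivity)]
  have := Real.quadratic_le_exp_of_nonneg (abs_nonneg x)
  rw [sq_abs] at this
  nlinarith [abs_nonneg x]

lemma const_nonneg_of_bound {k : ℝ → ℝ} {C b : ℝ}
    (h : ∀ x, |k x| ≤ C * exp (b * |x|)) : 0 ≤ C := by
  have := (abs_nonneg _).trans (h 0)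
  simpa using this

/-- A bound for `h u * k (x - u)` which is uniform for `x` in a bounded set. -/
lemma conv_bound {h k : ℝ → ℝ} (hh : ExpGrowth h) (hk : SuperExpDecay k) (R : ℝ) :
    ∃ C : ℝ, ∀ x u, |x| ≤ R → |h u * k (x - u)| ≤ C * exp (-|u|) := by
  obtain ⟨C, a, hC⟩ := hh
  obtain ⟨D, hD⟩ := hk (a + 1)
  have C0 : 0 ≤ C := const_nonneg_of_bound hC
  have D0 : 0 ≤ D := const_nonneg_of_bound (b := -((a + 1 : ℕ) : ℝ)) (fun x => by
    rw [neg_mul]; exact hD x)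
  refine ⟨C * D * exp ((a + 1) * R), fun x u hx => ?_⟩
  rw [abs_mul]
  calc |h u| * |k (x - u)|
      ≤ (C * exp (a * |u|)) * (D * exp (-((a + 1 : ℕ) * |x - u|))) :=
        mul_le_mul (hC u) (hD _) (abs_nonneg _) (by positivity)
    _ = C * D * exp (a * |u| + -((a + 1 : ℕ) * |x - u|)) := by rw [exp_add]; ring
    _ ≤ C * D * exp ((a + 1) * R + -|u|) := by
        refine mul_le_mul_of_nonneg_left (exp_le_exp.2 ?_) (by positivity)
        have h1 : |u| ≤ R + |x - u| := by
          have := abs_sub_abs_le_abs_sub u x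
          rw [abs_sub_comm] at this
          linarith
        push_cast
        nlinarith [mul_le_mul_of_nonneg_left h1 (by positivity : (0 : ℝ) ≤ a + 1)]
    _ = _ := by rw [exp_add]; ring

lemma integrable_conv {h k : ℝ → ℝ} (hh : ExpGrowth h) (hk : SuperExpDecay k)
    (ch : Continuous h) (ck : Continuous k) (x : ℝ) :
    Integrable (fun u => h u * k (x - u)) := by
  obtain ⟨C, hC⟩ := conv_bound hh hk |x|
  refine (integrable_exp_neg_abs'.const_mul C).mono'
    (Continuous.aestronglyMeasurable (by fun_prop)) (ae_of_all _ fun u => hC x u le_rfl)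

lemma hasDerivAt_conv {h k k' : ℝ → ℝ} (hh : ExpGrowth h) (hk : SuperExpDecay k)
    (hk' : SuperExpDecay k') (ch : Continuous h) (hd : ∀ x, HasDerivAt k (k' x) x)
    (ck' : Continuous k') (x : ℝ) :
    HasDerivAt (fun y => ∫ u, h u * k (y - u)) (∫ u, h u * k' (x - u)) x := by
  have ck : Continuous k := continuous_iff_continuousAt.2 fun x => (hd x).continuousAt
  obtain ⟨C, hC⟩ := conv_bound hh hk' (|x| + 1)
  refine (hasDerivAt_integral_of_dominated_loc_of_deriv_le (Metric.ball_mem_nhds x one_pos)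
    (Filter.Eventually.of_forall fun y => Continuous.aestronglyMeasurable (by fun_prop))
    (integrable_conv hh hk ch ck x) (F' := fun y u => h u * k' (y - u))
    (Continuous.aestronglyMeasurable (by fun_prop))
    (bound := fun u => C * exp (-|u|)) (ae_of_all _ fun u y hy => hC y u ?_)
    (integrable_exp_neg_abs'.const_mul C) (ae_of_all _ fun u y _ => ?_)).2
  · rw [Metric.mem_ball, Real.dist_eq] at hy
    have := abs_sub_abs_le_abs_sub y x
    linarith
  · exact ((hd (y - u)).comp_sub_const y u).const_mul _

lemma hasDerivAt_iteratedDeriv {n : WithTop ℕ∞} {k : ℝ → ℝ} (hk : ContDiff ℝ n k) (m : ℕ)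
    (hm : (m : WithTop ℕ∞) < n) (x : ℝ) :
    HasDerivAt (iteratedDeriv m k) (iteratedDeriv (m + 1) k x) x := by
  rw [iteratedDeriv_succ]
  exact (hk.differentiable_iteratedDeriv m hm x).hasDerivAt

lemma natCast_lt_infty (m : ℕ) : (m : WithTop ℕ∞) < ((⊤ : ℕ∞) : WithTop ℕ∞) := by
  exact_mod_cast ENat.natCast_lt_top m

/-- All derivatives of a convolution may fall on the kernel. -/
lemma iteratedDeriv_conv {h k : ℝ → ℝ} (hh : ExpGrowth h) (ch : Continuous h)
    (sk : ContDiff ℝ (⊤ : ℕ∞) k) (hk : ∀ m, SuperExpDecay (iteratedDeriv m k)) (m : ℕ) :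
    iteratedDeriv m (fun y => ∫ u, h u * k (y - u))
      = fun x => ∫ u, h u * iteratedDeriv m k (x - u) := by
  induction m with
  | zero => simp
  | succ m ih =>
    rw [iteratedDeriv_succ, ih]
    funext x
    exact (hasDerivAt_conv hh (hk m) (hk (m + 1)) ch
      (hasDerivAt_iteratedDeriv sk m (natCast_lt_infty m))
      (sk.continuous_iteratedDeriv _ (natCast_lt_infty _).le) x).deriv

lemma conv_parts {h h' k k' : ℝ → ℝ} (hh : ExpGrowth h) (hh' : ExpGrowth h')
    (hk : SuperExpDecay k) (hk' : SuperExpDecay k') (hd : ∀ x, HasDerivAt h (h' x) x)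
    (kd : ∀ x, HasDerivAt k (k' x) x) (ch' : Continuous h') (ck' : Continuous k') (x : ℝ) :
    ∫ u, h u * k' (x - u) = ∫ u, h' u * k (x - u) := by
  have ck : Continuous k := continuous_iff_continuousAt.2 fun x => (kd x).continuousAt
  have ch : Continuous h := continuous_iff_continuousAt.2 fun x => (hd x).continuousAt
  have key := integral_mul_deriv_eq_deriv_mul_of_integrable (u := h) (u' := h')
    (v := fun u => k (x - u)) (v' := fun u => -k' (x - u)) (fun u _ => hd u)
    (fun u _ => (kd (x - u)).comp_const_sub x u)
    (by simpa [Pi.mul_def] using (integrable_conv hh hk' ch ck' x).neg)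
    (integrable_conv hh' hk ch' ck x) (integrable_conv hh hk ch ck x)
  simp only [mul_neg, integral_neg, neg_inj] at key
  exact key

/-- Integration by parts moves `j` derivatives from the kernel onto `f`. -/
lemma conv_iterate_parts {f k : ℝ → ℝ} {l : ℕ} (hf : ContDiff ℝ l f)
    (gf : ∀ j ≤ l, ExpGrowth (iteratedDeriv j f)) (sk : ContDiff ℝ (⊤ : ℕ∞) k)
    (hk : ∀ m, SuperExpDecay (iteratedDeriv m k)) (m : ℕ) (x : ℝ) :
    ∀ j ≤ l, ∫ u, f u * iteratedDeriv (m + j) k (x - u)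
      = ∫ u, iteratedDeriv j f u * iteratedDeriv m k (x - u) := by
  intro j
  induction j generalizing m with
  | zero => simp
  | succ j ih =>
    intro hj
    have := ih (m + 1) (by omega)
    rw [show m + (j + 1) = m + 1 + j by ring, this]
    exact conv_parts (gf j (by omega)) (gf (j + 1) hj) (hk m) (hk (m + 1))
      (hasDerivAt_iteratedDeriv hf j (by exact_mod_cast hj))
      (hasDerivAt_iteratedDeriv sk m (natCast_lt_infty m))
      (hf.continuous_iteratedDeriv _ (by exact_mod_cast hj))
      (sk.continuous_iteratedDeriv _ (natCast_lt_infty _).le) x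

/-- The factor `|x|` lost in the mean value inequality is absorbed by `exp |x|`. -/
lemma ExpGrowth.of_deriv {h h' : ℝ → ℝ} (hh' : ExpGrowth h')
    (hd : ∀ x, HasDerivAt h (h' x) x) : ExpGrowth h := by
  obtain ⟨C, a, hC⟩ := hh'
  have C0 : 0 ≤ C := const_nonneg_of_bound hC
  refine ⟨|h 0| + C, a + 1, fun x => ?_⟩
  have key := Convex.norm_image_sub_le_of_norm_hasDerivWithin_le (f := h) (f' := h')
    (s := Set.Icc (-|x|) |x|) (C := C * exp (a * |x|)) (x := 0) (y := x)
    (fun y _ => (hd y).hasDerivWithinAt)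
    (fun y hy => (hC y).trans (by
      have := abs_le.2 hy
      gcongr)) (convex_Icc _ _)
    (by simp) ⟨neg_abs_le x, le_abs_self x⟩
  simp only [Real.norm_eq_abs, sub_zero] at key
  have h1 : |x| ≤ exp |x| := by linarith [add_one_le_exp |x|]
  have h2 : 1 ≤ exp (((a + 1 : ℕ) : ℝ) * |x|) := one_le_exp (by positivity)
  have h3 : exp (a * |x|) * |x| ≤ exp (((a + 1 : ℕ) : ℝ) * |x|) := by
    push_cast
    rw [add_mul, one_mul, exp_add]
    gcongr
  have h4 := abs_sub_abs_le_abs_sub (h x) (h 0)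
  calc |h x| ≤ |h 0| * 1 + C * (exp (a * |x|) * |x|) := by linarith
    _ ≤ |h 0| * exp (((a + 1 : ℕ) : ℝ) * |x|) + C * exp (((a + 1 : ℕ) : ℝ) * |x|) := by gcongr
    _ = _ := by ring

lemma expGrowth_abs_rpow {α : ℝ} (h0 : 0 ≤ α) (h1 : α ≤ 1) : ExpGrowth (fun x => |x| ^ α) := by
  refine ⟨1, 1, fun x => ?_⟩
  rw [abs_of_nonneg (by positivity)]
  calc |x| ^ α ≤ (1 + |x|) ^ α := by gcongr; linarith
    _ ≤ (1 + |x|) ^ (1 : ℝ) := rpow_le_rpow_of_exponent_le (by linarith [abs_nonneg x]) h1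
    _ ≤ _ := by
      have := add_one_le_exp |x|
      simp only [rpow_one, Nat.cast_one, one_mul]; linarith

lemma expGrowth_iteratedDeriv {f : ℝ → ℝ} {l : ℕ} (hf : ContDiff ℝ l f)
    (hl : ExpGrowth (iteratedDeriv l f)) : ∀ j ≤ l, ExpGrowth (iteratedDeriv j f) := by
  intro j hj
  induction hj using Nat.decreasingInduction with
  | self => exact hl
  | of_succ j hj ih =>
    exact ih.of_deriv (hasDerivAt_iteratedDeriv hf j (by exact_mod_cast hj))

/-! ### The Gaussian density -/

lemma gaussianDensity_scale (t : ℝ) :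
    gaussianDensity t = fun x => t⁻¹ * gaussianDensity 1 (t⁻¹ * x) := by
  funext x
  unfold gaussianDensity
  rw [one_mul, ← mul_assoc]
  congr 1
  · rw [one_div, mul_inv, one_div]
  · congr 1
    simp only [div_eq_mul_inv, mul_inv, mul_pow, inv_pow]
    ring

lemma contDiff_gaussianDensity (t : ℝ) : ContDiff ℝ (⊤ : ℕ∞) (gaussianDensity t) := by
  unfold gaussianDensity
  fun_prop

lemma iteratedDeriv_gaussianDensity (t : ℝ) (m : ℕ) (x : ℝ) :
    iteratedDeriv m (gaussianDensity t) x
      = t⁻¹ * (t⁻¹ ^ m * iteratedDeriv m (gaussianDensity 1) (t⁻¹ * x)) := by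
  conv_lhs => rw [gaussianDensity_scale t]
  rw [iteratedDeriv_const_mul_field t⁻¹ (fun x => gaussianDensity 1 (t⁻¹ * x)),
    iteratedDeriv_comp_const_mul
      ((contDiff_gaussianDensity 1).of_le (natCast_lt_infty m).le) t⁻¹]

lemma expGrowth_polynomial (P : Polynomial ℝ) : ExpGrowth (fun x => P.eval x) := by
  induction P using Polynomial.induction_on' with
  | add P Q hP hQ =>
    obtain ⟨C, a, hC⟩ := hP
    obtain ⟨D, b, hD⟩ := hQ
    have C0 : 0 ≤ C := const_nonneg_of_bound hC
    have D0 : 0 ≤ D := const_nonneg_of_bound hD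
    refine ⟨C + D, a + b, fun x => ?_⟩
    beta_reduce
    rw [Polynomial.eval_add, add_mul]
    refine (abs_add_le _ _).trans (add_le_add ((hC x).trans ?_) ((hD x).trans ?_)) <;>
    · push_cast
      gcongr
      simp
  | monomial n c =>
    refine ⟨|c|, n, fun x => ?_⟩
    beta_reduce
    rw [Polynomial.eval_monomial, abs_mul, abs_pow, exp_nat_mul]
    gcongr
    linarith [add_one_le_exp |x|]

lemma iteratedDeriv_gaussianDensity_one (m : ℕ) (x : ℝ) :
    iteratedDeriv m (gaussianDensity 1) x = (1 / √(2 * π)) *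
      ((-1) ^ m * Polynomial.aeval x (Polynomial.hermite m) * exp (-(x ^ 2 / 2))) := by
  have : gaussianDensity 1 = fun x => (1 / √(2 * π)) * exp (-(x ^ 2 / 2)) := by
    funext y
    simp [gaussianDensity, neg_div]
  rw [this, iteratedDeriv_const_mul_field (1 / √(2 * π)) (fun x : ℝ => exp (-(x ^ 2 / 2))),
    iteratedDeriv_eq_iterate, Polynomial.deriv_gaussian_eq_hermite_mul_gaussian]

lemma superExpDecay_gaussian_one (m : ℕ) :
    SuperExpDecay (iteratedDeriv m (gaussianDensity 1)) := by
  intro a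
  obtain ⟨C, b, hC⟩ := expGrowth_polynomial ((Polynomial.hermite m).map (Int.castRingHom ℝ))
  have C0 : 0 ≤ C := const_nonneg_of_bound hC
  refine ⟨1 / √(2 * π) * (C * exp ((a + b : ℝ) ^ 2 / 2)), fun x => ?_⟩
  have hx : |Polynomial.aeval x (Polynomial.hermite m)| ≤ C * exp (b * |x|) := by
    have := hC x
    beta_reduce at this
    rwa [Polynomial.eval_map, ← algebraMap_int_eq, ← Polynomial.aeval_def] at this
  rw [iteratedDeriv_gaussianDensity_one, abs_mul, abs_mul, abs_mul, abs_pow, abs_neg, abs_one,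
    one_pow, one_mul, abs_of_pos (exp_pos _), abs_of_nonneg (by positivity),
    mul_assoc (1 / √(2 * π))]
  refine mul_le_mul_of_nonneg_left ?_ (by positivity)
  calc |Polynomial.aeval x (Polynomial.hermite m)| * exp (-(x ^ 2 / 2))
      ≤ C * exp (b * |x|) * exp (-(x ^ 2 / 2)) := by gcongr
    _ = C * exp (b * |x| + -(x ^ 2 / 2)) := by rw [exp_add]; ring
    _ ≤ C * exp ((a + b : ℝ) ^ 2 / 2 + -(a * |x|)) := by
        refine mul_le_mul_of_nonneg_left (exp_le_exp.2 ?_) C0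
        -- completing the square
        nlinarith [sq_nonneg (|x| - (a + b)), sq_abs x]
    _ = _ := by rw [exp_add]; ring

lemma superExpDecay_gaussian {t : ℝ} (ht : 0 < t) (m : ℕ) :
    SuperExpDecay (iteratedDeriv m (gaussianDensity t)) := by
  intro a
  obtain ⟨b, hb⟩ := exists_nat_ge (a * t)
  obtain ⟨C, hC⟩ := superExpDecay_gaussian_one m b
  have C0 : 0 ≤ C := const_nonneg_of_bound (b := -(b : ℝ)) (fun x => by
    rw [neg_mul]; exact hC x)
  refine ⟨t⁻¹ * (t⁻¹ ^ m * C), fun x => ?_⟩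
  rw [iteratedDeriv_gaussianDensity, abs_mul, abs_mul, abs_of_pos (inv_pos.2 ht),
    abs_of_pos (by positivity : 0 < t⁻¹ ^ m), mul_assoc, mul_assoc]
  gcongr
  refine (hC _).trans ?_
  rw [abs_mul, abs_of_pos (inv_pos.2 ht), ← mul_assoc]
  gcongr
  rwa [← div_eq_mul_inv, le_div_iff₀ ht]

/-- Integration by parts against the constant `1`: a derivative of positive order integrates to
zero. -/
lemma integral_iteratedDeriv_gaussian {t : ℝ} (ht : 0 < t) (m : ℕ) (x : ℝ) :
    ∫ u, iteratedDeriv (m + 1) (gaussianDensity t) (x - u) = 0 := by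
  have hone : ExpGrowth (fun _ : ℝ => (1 : ℝ)) := ⟨1, 0, fun x => by simp⟩
  have hzero : ExpGrowth (fun _ : ℝ => (0 : ℝ)) := ⟨0, 0, fun x => by simp⟩
  have := conv_parts hone hzero (superExpDecay_gaussian ht m) (superExpDecay_gaussian ht (m + 1))
    (fun x => hasDerivAt_const x 1)
    (hasDerivAt_iteratedDeriv (contDiff_gaussianDensity t) m (natCast_lt_infty m))
    continuous_const
    ((contDiff_gaussianDensity t).continuous_iteratedDeriv _ (natCast_lt_infty _).le) x
  simpa using this

lemma integral_abs_rpow_mul_gaussian {t : ℝ} (ht : 0 < t) (m : ℕ) (α : ℝ) :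
    ∫ z, |z| ^ α * |iteratedDeriv m (gaussianDensity t) z|
      = (∫ z, |z| ^ α * |iteratedDeriv m (gaussianDensity 1) z|) * t ^ (α - m) := by
  have e : ∀ z, |z| ^ α * |iteratedDeriv m (gaussianDensity t) z| =
      (t ^ α * t⁻¹ * t⁻¹ ^ m) *
        (|t⁻¹ * z| ^ α * |iteratedDeriv m (gaussianDensity 1) (t⁻¹ * z)|) := by
    intro z
    rw [iteratedDeriv_gaussianDensity, abs_mul, abs_mul, abs_of_pos (inv_pos.2 ht),
      abs_of_pos (by positivity : 0 < t⁻¹ ^ m), abs_mul, abs_of_pos (inv_pos.2 ht),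
      mul_rpow (by positivity) (abs_nonneg z), inv_rpow ht.le]
    have : t ^ α ≠ 0 := (rpow_pos_of_pos ht α).ne'
    field_simp
  simp_rw [e]
  rw [integral_const_mul, Measure.integral_comp_mul_left
    (fun z => |z| ^ α * |iteratedDeriv m (gaussianDensity 1) z|) t⁻¹, inv_inv, abs_of_pos ht,
    smul_eq_mul, rpow_sub ht, rpow_natCast, inv_pow]
  field_simp

theorem smoothing_lemma_integer_case
    (l : ℕ) (r : ℝ) (hlr : (l : ℝ) < r) (hrl : r ≤ l + 1)
    (f : ℝ → ℝ) (hf : ContDiff ℝ l f)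
    (hHolder : ∀ x y : ℝ, |iteratedDeriv l f x - iteratedDeriv l f y| ≤ |x - y| ^ (r - l))
    (p : ℕ) (hp : r ≤ p) (t : ℝ) (ht : 0 < t) :
    ∀ x : ℝ,
      |iteratedDeriv p (fun y => ∫ u : ℝ, f u * gaussianDensity t (y - u)) x|
        ≤ (∫ z : ℝ, |z| ^ (r - l) * |iteratedDeriv (p - l) (gaussianDensity 1) z|)
            * t ^ (r - p) := by
  intro x
  have hlp : l < p := by exact_mod_cast hlr.trans_le hp
  obtain ⟨m, rfl⟩ : ∃ m, p = m + 1 + l := ⟨p - l - 1, by omega⟩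
  have gα : ExpGrowth (fun x => |x| ^ (r - l)) :=
    expGrowth_abs_rpow (by linarith) (by linarith)
  have gl : ExpGrowth (iteratedDeriv l f) := by
    obtain ⟨C, a, hC⟩ := gα
    have C0 : 0 ≤ C := const_nonneg_of_bound hC
    refine ⟨|iteratedDeriv l f 0| + C, a, fun x => ?_⟩
    have h1 := hHolder x 0
    rw [sub_zero] at h1
    have h2 := (le_abs_self _).trans (hC x)
    have h3 := abs_sub_abs_le_abs_sub (iteratedDeriv l f x) (iteratedDeriv l f 0)
    have h4 : 1 ≤ exp (a * |x|) := one_le_exp (by positivity)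
    nlinarith [abs_nonneg (iteratedDeriv l f 0)]
  have gf := expGrowth_iteratedDeriv hf gl
  have sk := contDiff_gaussianDensity t
  have hk := superExpDecay_gaussian ht
  have cl : Continuous (iteratedDeriv l f) := hf.continuous_iteratedDeriv _ le_rfl
  have ck : Continuous (iteratedDeriv (m + 1) (gaussianDensity t)) :=
    sk.continuous_iteratedDeriv _ (natCast_lt_infty _).le
  have cα : Continuous (fun x : ℝ => |x| ^ (r - l)) :=
    continuous_abs.rpow_const fun _ => Or.inr (by linarith)
  rw [iteratedDeriv_conv (by simpa using gf 0 (Nat.zero_le _)) hf.continuous sk hk]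
  beta_reduce
  rw [conv_iterate_parts hf gf sk hk (m + 1) x l le_rfl, Nat.add_sub_cancel]
  -- the kernel `g^(m+1)` has integral zero, so subtracting the constant `f^(l)(x)` changes nothing
  have hconst : ∫ u, iteratedDeriv l f u * iteratedDeriv (m + 1) (gaussianDensity t) (x - u)
      = ∫ u, (iteratedDeriv l f u - iteratedDeriv l f x) *
          iteratedDeriv (m + 1) (gaussianDensity t) (x - u) := by
    have hone : ExpGrowth (fun _ : ℝ => (1 : ℝ)) := ⟨1, 0, fun x => by simp⟩
    have i1 := integrable_conv hone (hk (m + 1)) continuous_const ck x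
    simp only [one_mul] at i1
    simp_rw [sub_mul]
    rw [integral_sub (integrable_conv gl (hk (m + 1)) cl ck x) (i1.const_mul _),
      integral_const_mul, integral_iteratedDeriv_gaussian ht, mul_zero, sub_zero]
  have hint : Integrable
      (fun z => |z| ^ (r - l) * |iteratedDeriv (m + 1) (gaussianDensity t) z|) := by
    have hd : SuperExpDecay (fun z => |iteratedDeriv (m + 1) (gaussianDensity t) (-z)|) := by
      intro a
      obtain ⟨C, hC⟩ := hk (m + 1) a
      exact ⟨C, fun x => by simpa using hC (-x)⟩
    simpa using integrable_conv gα hd cα (by fun_prop) 0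
  calc |∫ u, iteratedDeriv l f u * iteratedDeriv (m + 1) (gaussianDensity t) (x - u)|
      ≤ ∫ u, |x - u| ^ (r - l) * |iteratedDeriv (m + 1) (gaussianDensity t) (x - u)| := by
        rw [hconst, ← Real.norm_eq_abs]
        refine norm_integral_le_of_norm_le (hint.comp_sub_left x) (ae_of_all _ fun u => ?_)
        rw [norm_mul, Real.norm_eq_abs, Real.norm_eq_abs, abs_sub_comm x u]
        gcongr
        exact hHolder u x
    _ = ∫ z, |z| ^ (r - l) * |iteratedDeriv (m + 1) (gaussianDensity t) z| :=
        integral_sub_left_eq_self (μ := volume)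
          (fun z : ℝ => |z| ^ (r - l) * |iteratedDeriv (m + 1) (gaussianDensity t) z|) x
    _ = _ := by
        rw [integral_abs_rpow_mul_gaussian ht]
        congr 2
        push_cast
        ring
end

section
/- Let X = (X_1, ..., X_k) be an ℝ^k-valued random variable with integrable coordinates such that the product ∏(X_i − E X_i) is integrable. Then E(∏_{i=1}^k (X_i − E X_i)) = ∫_{ℝ^k} E(∏_{i=1}^k (1_{X_i > x_i} − P(X_i > x_i))) dx_1...dx_k. -/
/-!
Since `1_{t < a} - P(t < Y) = E(1_{t < a} - 1_{t < Y})` and `∫ (1_{t < a} - 1_{t < b}) dt = a - b`,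
with `∫ |1_{t < a} - 1_{t < b}| dt = |a - b|`, Fubini on `ℝ × Ω` gives, for every integrable `Y`,
`∫ (1_{t < a} - P(t < Y)) dt = a - E Y` (`integral_ite_sub_measure_lt`). Applying this to
`a = X i ω`, `Y = X i` in each coordinate and multiplying, the integral of a product of functions of
separate variables being the product of the integrals, yields
`∏ (X i ω - E (X i)) = ∫ ∏ (1_{x i < X i ω} - P(x i < X i)) dx` for each fixed `ω`. The identity
follows by integrating over `ω` and exchanging the two integrals, by the assumed joint integrability.
-/

open MeasureTheory

lemma ite_lt_sub_ite_lt_eq_indicator (a b t : ℝ) :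
    (if t < a then (1 : ℝ) else 0) - (if t < b then 1 else 0)
      = (Set.Ico b a).indicator (fun _ => 1) t - (Set.Ico a b).indicator (fun _ => 1) t := by
  simp only [Set.indicator_apply, Set.mem_Ico]
  grind

lemma norm_ite_lt_sub_ite_lt_eq_indicator (a b t : ℝ) :
    ‖(if t < a then (1 : ℝ) else 0) - (if t < b then 1 else 0)‖
      = (Set.Ico b a).indicator (fun _ => 1) t + (Set.Ico a b).indicator (fun _ => 1) t := by
  simp only [Set.indicator_apply, Set.mem_Ico, Real.norm_eq_abs]
  grind

lemma integrable_indicator_Ico_one (a b : ℝ) :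
    Integrable ((Set.Ico a b).indicator (fun _ => (1 : ℝ))) :=
  (integrable_indicator_iff measurableSet_Ico).2 (integrableOn_const (by simp) (by simp))

lemma integral_indicator_Ico_one (a b : ℝ) :
    ∫ t, (Set.Ico a b).indicator (fun _ => (1 : ℝ)) t = max (b - a) 0 := by
  rw [integral_indicator measurableSet_Ico]
  simp [measureReal_def, ENNReal.toReal_ofReal']

lemma integrable_ite_lt_sub_ite_lt (a b : ℝ) :
    Integrable (fun t : ℝ => (if t < a then (1 : ℝ) else 0) - (if t < b then 1 else 0)) := by
  simp only [ite_lt_sub_ite_lt_eq_indicator]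
  exact (integrable_indicator_Ico_one b a).sub (integrable_indicator_Ico_one a b)

lemma integral_ite_lt_sub_ite_lt (a b : ℝ) :
    ∫ t : ℝ, ((if t < a then (1 : ℝ) else 0) - (if t < b then 1 else 0)) = a - b := by
  simp only [ite_lt_sub_ite_lt_eq_indicator]
  rw [integral_sub (integrable_indicator_Ico_one b a) (integrable_indicator_Ico_one a b),
    integral_indicator_Ico_one, integral_indicator_Ico_one]
  grind

lemma integral_norm_ite_lt_sub_ite_lt (a b : ℝ) :
    ∫ t : ℝ, ‖(if t < a then (1 : ℝ) else 0) - (if t < b then 1 else 0)‖ = |a - b| := by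
  simp only [norm_ite_lt_sub_ite_lt_eq_indicator]
  rw [integral_add (integrable_indicator_Ico_one b a) (integrable_indicator_Ico_one a b),
    integral_indicator_Ico_one, integral_indicator_Ico_one]
  grind

/-- The one-dimensional case, with the value of the random variable in the indicator replaced by an
arbitrary real `a`. -/
lemma integral_ite_sub_measure_lt {Ω : Type*} [MeasurableSpace Ω] (μ : Measure Ω)
    [IsProbabilityMeasure μ] (Y : Ω → ℝ) (hY : Measurable Y) (hint : Integrable Y μ) (a : ℝ) :
    ∫ t : ℝ, ((if t < a then (1 : ℝ) else 0) - (μ {ω | t < Y ω}).toReal)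
      = a - ∫ ω, Y ω ∂μ := by
  have hmeas : Measurable (fun p : ℝ × Ω =>
      (if p.1 < a then (1 : ℝ) else 0) - (if p.1 < Y p.2 then 1 else 0)) :=
    (Measurable.ite (measurableSet_lt measurable_fst measurable_const) measurable_const
      measurable_const).sub
    (Measurable.ite (measurableSet_lt measurable_fst (hY.comp measurable_snd)) measurable_const
      measurable_const)
  have hI : Integrable (fun p : ℝ × Ω =>
      (if p.1 < a then (1 : ℝ) else 0) - (if p.1 < Y p.2 then 1 else 0))
      ((volume : Measure ℝ).prod μ) := by
    rw [integrable_prod_iff' hmeas.aestronglyMeasurable]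
    refine ⟨.of_forall fun ω => integrable_ite_lt_sub_ite_lt a (Y ω), ?_⟩
    simp only [integral_norm_ite_lt_sub_ite_lt]
    exact ((integrable_const a).sub hint).abs
  have hE : ∀ t : ℝ, (if t < a then (1 : ℝ) else 0) - (μ {ω | t < Y ω}).toReal
      = ∫ ω, ((if t < a then (1 : ℝ) else 0) - (if t < Y ω then 1 else 0)) ∂μ := by
    intro t
    have hs : MeasurableSet {ω | t < Y ω} := measurableSet_lt measurable_const hY
    have h1 : (fun ω => if t < Y ω then (1 : ℝ) else 0)
        = {ω | t < Y ω}.indicator (fun _ => (1 : ℝ)) := by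
      ext ω; simp [Set.indicator_apply]
    have h2 : Integrable (fun ω => if t < Y ω then (1 : ℝ) else 0) μ := by
      rw [h1]; exact (integrable_const _).indicator hs
    rw [integral_sub (integrable_const _) h2, h1, integral_indicator hs]
    simp [measureReal_def]
  simp_rw [hE]
  rw [integral_integral_swap hI]
  simp_rw [integral_ite_lt_sub_ite_lt]
  rw [integral_sub (integrable_const _) hint]
  simp

theorem multivariate_hoeffding_identity
    {Ω : Type*} [MeasurableSpace Ω] (μ : Measure Ω) [IsProbabilityMeasure μ]
    (k : ℕ) (X : Fin k → Ω → ℝ)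
    (hmeas : ∀ i, Measurable (X i))
    (hint : ∀ i, Integrable (X i) μ)
    (hprod : Integrable (fun ω => ∏ i, (X i ω - ∫ ω', X i ω' ∂μ)) μ)
    (hfub : Integrable
      (fun p : (Fin k → ℝ) × Ω =>
        ∏ i, ((if p.1 i < X i p.2 then (1 : ℝ) else 0) - (μ {ω | p.1 i < X i ω}).toReal))
      ((volume : Measure (Fin k → ℝ)).prod μ)) :
    ∫ ω, ∏ i, (X i ω - ∫ ω', X i ω' ∂μ) ∂μ
      = ∫ x : Fin k → ℝ,
          (∫ ω, ∏ i, ((if x i < X i ω then (1 : ℝ) else 0) - (μ {ω' | x i < X i ω'}).toReal) ∂μ) := by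
  rw [integral_integral_swap hfub]
  refine integral_congr_ae (.of_forall fun ω => ?_)
  simp only
  rw [integral_fintype_prod_volume_eq_prod (fun i (t : ℝ) =>
    (if t < X i ω then (1 : ℝ) else 0) - (μ {ω' | t < X i ω'}).toReal)]
  exact Finset.prod_congr rfl fun i _ =>
    (integral_ite_sub_measure_lt μ (X i) (hmeas i) (hint i) (X i ω)).symm
end
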